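/- Let T : M₀ → M₀ be a monotone distributional transform on the set of all probability distributions on ℝ. Then T commutes with the set 𝒰 of all utility transforms (i.e., 𝒰 ∘ T = T ∘ 𝒰 as sets of maps) if and only if T = T_d ∘ T^u for some d ∈ F̂_D and some strictly increasing, continuous, surjective u : ℝ → ℝ. -/

import Mathlib

/-!
**If.** For increasing continuous `v`, the set `{v ≤ x}` is empty, all of `ℝ`, or a half-line
`(-∞, a]`. Hence `d (G x) ≤ T^v (T_d F) x ≤ d (G y)` for `G = T^v F` and `x < y`, and by
right-continuity these bounds say `T^v (T_d F) = T_d G`. So every `T_d` commutes with every `T^v`,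
and conjugating by an increasing bijection `u` permutes the utility transforms.

**Only if.** Constant utilities force `T` to send point masses to point masses, `T δ_x = δ_{h x}`,
with `h` increasing and onto. If `h a = h b` for some `a < b`, utilities sending `(a, b)` to an
arbitrary increasing pair would make `h` constant; so `h` is an increasing bijection. Put
`S = T ∘ T^{h⁻¹}`. It fixes point masses, so it commutes with each `T^v` individually. Let `d p` be
the value at `0` of `S B_p`, where `B_p` has mass `p` at `0` and mass `1 - p` at `1`. For `x < y`,
a ramp utility from `x` to `y` sends `F` to a law between `B_{F x}` and `B_{F y}`, so
`d (F x) ≤ S F x ≤ d (F y)`. Right-continuity of `S F` gives `S = T_d`, and `T = S ∘ T^h`.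
-/

open MeasureTheory Filter Topology Set

noncomputable section

/-- The set of cdfs of compactly supported probability distributions on ℝ:
increasing, right-continuous, equal to `0` for all sufficiently small `x` and
equal to `1` for all sufficiently large `x`. -/
def mSet : Set (ℝ → ℝ) :=
  {F | Monotone F ∧ (∀ x, ContinuousWithinAt F (Set.Ici x) x) ∧
    (∃ a, ∀ x ≤ a, F x = 0) ∧ (∃ b, ∀ x, b ≤ x → F x = 1)}

/-- The set of cdfs of all probability distributions on ℝ: increasing,
right-continuous, with limit `0` at `-∞` and limit `1` at `+∞`. -/
def m0Set : Set (ℝ → ℝ) :=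
  {F | Monotone F ∧ (∀ x, ContinuousWithinAt F (Set.Ici x) x) ∧
    Tendsto F atBot (𝓝 0) ∧ Tendsto F atTop (𝓝 1)}

/-- A utility function: increasing (non-strict) and continuous. -/
def IsUF (u : ℝ → ℝ) : Prop := Monotone u ∧ Continuous u

/-- An increasing and left-continuous function on ℝ. -/
def IsLeftCtsIncr (u : ℝ → ℝ) : Prop :=
  Monotone u ∧ ∀ x, ContinuousWithinAt u (Set.Iic x) x

/-- A distortion function: an increasing function `d : [0,1] → [0,1]` with
`d 0 = 0` and `d 1 = 1` (values outside `[0,1]` are irrelevant). -/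
def IsDF (d : ℝ → ℝ) : Prop :=
  MonotoneOn d (Set.Icc 0 1) ∧ d 0 = 0 ∧ d 1 = 1

/-- Right-continuity of a distortion function on `[0,1)`. -/
def DFRightCts (d : ℝ → ℝ) : Prop :=
  ∀ x ∈ Set.Ico (0:ℝ) 1, ContinuousWithinAt d (Set.Ioi x) x

/-- A distortion function with moreover `d(0+) = 0` and `d(1-) = 1`. -/
def IsDFhat (d : ℝ → ℝ) : Prop :=
  IsDF d ∧ Tendsto d (𝓝[>] (0:ℝ)) (𝓝 0) ∧ Tendsto d (𝓝[<] (1:ℝ)) (𝓝 1)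

/-- The probability distortion generated by `d`:  `T_d F x = (d ∘ F)(x+)`,
the right limit of `d ∘ F` at `x`. -/
noncomputable def distortT (d F : ℝ → ℝ) : ℝ → ℝ :=
  fun x => Function.rightLim (d ∘ F) x

/-- The utility transform `T^u`: it maps a cdf `F` to the cdf of the
pushforward under `u` of the probability measure with cdf `F`. -/
noncomputable def utilityT (u F : ℝ → ℝ) : ℝ → ℝ := by
  classical
  exact
    if h : Monotone F ∧ ∀ x, ContinuousWithinAt F (Set.Ici x) x then
      fun x => ((StieltjesFunction.measure ⟨F, h.1, h.2⟩).map u (Set.Iic x)).toReal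
    else F

/-- Left quantile `F_L^{-1}(p) = inf {x | F x ≥ p}`. -/
noncomputable def leftQ (F : ℝ → ℝ) (p : ℝ) : ℝ := sInf {x | p ≤ F x}

/-- Right quantile `F_R^{-1}(p) = inf {x | F x > p}`. -/
noncomputable def rightQ (F : ℝ → ℝ) (p : ℝ) : ℝ := sInf {x | p < F x}

open ProbabilityTheory Function

/-! ### Order and one-sided limits -/

lemma eq_empty_or_univ_or_Iic_of_isClosed_of_isLowerSet {α : Type*}
    [ConditionallyCompleteLinearOrder α] [TopologicalSpace α] [OrderTopology α] {s : Set α}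
    (hc : IsClosed s) (hs : IsLowerSet s) : s = ∅ ∨ s = univ ∨ ∃ a, s = Iic a := by
  rcases s.eq_empty_or_nonempty with rfl | hne
  · exact Or.inl rfl
  by_cases hb : BddAbove s
  · exact Or.inr (Or.inr ⟨sSup s, Subset.antisymm (fun _ hx => le_csSup hb hx)
      (hs.Iic_subset (hc.csSup_mem hne hb))⟩)
  · refine Or.inr (Or.inl (eq_univ_of_forall fun x => ?_))
    obtain ⟨y, hy, hxy⟩ := not_bddAbove_iff.1 hb x
    exact hs hxy.le hy

lemma rightLim_eq_of_sandwich {α β : Type*} [LinearOrder α] [TopologicalSpace α] [OrderTopology α]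
    [LinearOrder β] [TopologicalSpace β] [OrderTopology β] {f g : α → β} {x : α} [(𝓝[>] x).NeBot]
    (hg : ContinuousWithinAt g (Ici x) x) (hfg : ∀ y, x < y → f y ≤ g y)
    (hgf : ∀ y, x < y → g x ≤ f y) : rightLim f x = g x :=
  rightLim_eq_of_tendsto <| tendsto_const_nhds.squeeze' (hg.mono Ioi_subset_Ici_self)
    (eventually_nhdsWithin_of_forall hgf) (eventually_nhdsWithin_of_forall hfg)

/-! ### Distribution functions and utility transforms -/

lemma cdf_mem_m0Set (μ : Measure ℝ) : ⇑(cdf μ) ∈ m0Set :=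
  ⟨monotone_cdf μ, (cdf μ).right_continuous, tendsto_cdf_atBot μ, tendsto_cdf_atTop μ⟩

lemma exists_eq_cdf_of_mem_m0Set {F : ℝ → ℝ} (hF : F ∈ m0Set) :
    ∃ μ : Measure ℝ, IsProbabilityMeasure μ ∧ F = cdf μ := by
  obtain ⟨hmono, hcont, hbot, htop⟩ := hF
  let f : StieltjesFunction ℝ := ⟨F, hmono, hcont⟩
  refine ⟨f.measure, ⟨?_⟩, ?_⟩
  · rw [f.measure_univ hbot htop, sub_zero, ENNReal.ofReal_one]
  · rw [cdf_measure_stieltjesFunction f hbot htop]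

lemma apply_mem_Icc_of_mem_m0Set {F : ℝ → ℝ} (hF : F ∈ m0Set) (x : ℝ) : F x ∈ Icc (0 : ℝ) 1 := by
  obtain ⟨μ, _, rfl⟩ := exists_eq_cdf_of_mem_m0Set hF
  exact ⟨cdf_nonneg μ x, cdf_le_one μ x⟩

lemma convex_m0Set : Convex ℝ m0Set := by
  rintro F ⟨hFmono, hFcont, hFbot, hFtop⟩ G ⟨hGmono, hGcont, hGbot, hGtop⟩ a b ha hb hab
  refine ⟨(hFmono.const_mul ha).add (hGmono.const_mul hb),
    fun x => ((hFcont x).const_mul a).add ((hGcont x).const_mul b), ?_, ?_⟩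
  · simpa using! (hFbot.const_mul a).add (hGbot.const_mul b)
  · simpa [hab] using! (hFtop.const_mul a).add (hGtop.const_mul b)

lemma sigmoid_mem_m0Set : Real.sigmoid ∈ m0Set :=
  ⟨Real.sigmoid_monotone, fun _ => continuous_sigmoid.continuousWithinAt,
    Real.tendsto_sigmoid_atBot, Real.tendsto_sigmoid_atTop⟩

section Utility

variable {F u v : ℝ → ℝ} {a z : ℝ}

lemma utilityT_cdf (μ : Measure ℝ) [IsProbabilityMeasure μ] (hu : Measurable u) :
    utilityT u (cdf μ) = cdf (μ.map u) := by
  have := Measure.isProbabilityMeasure_map (μ := μ) hu.aemeasurable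
  ext x
  rw [cdf_eq_real, utilityT, dif_pos ⟨monotone_cdf μ, (cdf μ).right_continuous⟩, measureReal_def]
  congr 3
  exact measure_cdf μ

lemma mapsTo_utilityT (hu : Measurable u) : MapsTo (utilityT u) m0Set m0Set := by
  intro F hF
  obtain ⟨μ, _, rfl⟩ := exists_eq_cdf_of_mem_m0Set hF
  rw [utilityT_cdf μ hu]
  exact cdf_mem_m0Set _

lemma utilityT_utilityT (hF : F ∈ m0Set) (hu : Measurable u) (hv : Measurable v) :
    utilityT u (utilityT v F) = utilityT (u ∘ v) F := by
  obtain ⟨μ, _, rfl⟩ := exists_eq_cdf_of_mem_m0Set hF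
  have := Measure.isProbabilityMeasure_map (μ := μ) hv.aemeasurable
  rw [utilityT_cdf μ hv, utilityT_cdf _ hu, utilityT_cdf _ (hu.comp hv), Measure.map_map hu hv]

lemma utilityT_id (hF : F ∈ m0Set) : utilityT id F = F := by
  obtain ⟨μ, _, rfl⟩ := exists_eq_cdf_of_mem_m0Set hF
  rw [utilityT_cdf μ measurable_id, Measure.map_id]

lemma utilityT_cdf_apply (μ : Measure ℝ) [IsProbabilityMeasure μ] (hu : Measurable u) (z : ℝ) :
    utilityT u (cdf μ) z = μ.real (u ⁻¹' Iic z) := by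
  have := Measure.isProbabilityMeasure_map (μ := μ) hu.aemeasurable
  rw [utilityT_cdf μ hu, cdf_eq_real, map_measureReal_apply hu measurableSet_Iic]

lemma utilityT_apply_le (hF : F ∈ m0Set) (hu : Measurable u) (h : u ⁻¹' Iic z ⊆ Iic a) :
    utilityT u F z ≤ F a := by
  obtain ⟨μ, _, rfl⟩ := exists_eq_cdf_of_mem_m0Set hF
  rw [utilityT_cdf_apply μ hu, cdf_eq_real]
  exact measureReal_mono h

lemma le_utilityT_apply (hF : F ∈ m0Set) (hu : Measurable u) (h : Iic a ⊆ u ⁻¹' Iic z) :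
    F a ≤ utilityT u F z := by
  obtain ⟨μ, _, rfl⟩ := exists_eq_cdf_of_mem_m0Set hF
  rw [utilityT_cdf_apply μ hu, cdf_eq_real]
  exact measureReal_mono h

lemma utilityT_apply_of_preimage_eq_Iic (hF : F ∈ m0Set) (hu : Measurable u)
    (h : u ⁻¹' Iic z = Iic a) : utilityT u F z = F a :=
  le_antisymm (utilityT_apply_le hF hu h.subset) (le_utilityT_apply hF hu h.superset)

lemma utilityT_apply_eq_zero (hF : F ∈ m0Set) (hu : Measurable u) (h : u ⁻¹' Iic z = ∅) :
    utilityT u F z = 0 := by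
  obtain ⟨μ, _, rfl⟩ := exists_eq_cdf_of_mem_m0Set hF
  rw [utilityT_cdf_apply μ hu, h, measureReal_empty]

lemma utilityT_apply_eq_one (hF : F ∈ m0Set) (hu : Measurable u) (h : u ⁻¹' Iic z = univ) :
    utilityT u F z = 1 := by
  obtain ⟨μ, _, rfl⟩ := exists_eq_cdf_of_mem_m0Set hF
  rw [utilityT_cdf_apply μ hu, h, probReal_univ]

lemma isUF_const (c : ℝ) : IsUF fun _ => c := ⟨monotone_const, continuous_const⟩

lemma isUF_orderIso (e : ℝ ≃o ℝ) : IsUF e := ⟨e.monotone, e.continuous⟩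

namespace IsUF

lemma measurable (hu : IsUF u) : Measurable u := hu.2.measurable

lemma comp (hu : IsUF u) (hv : IsUF v) : IsUF (u ∘ v) := ⟨hu.1.comp hv.1, hu.2.comp hv.2⟩

lemma preimage_Iic (hu : IsUF u) (z : ℝ) :
    u ⁻¹' Iic z = ∅ ∨ u ⁻¹' Iic z = univ ∨ ∃ a, u ⁻¹' Iic z = Iic a :=
  eq_empty_or_univ_or_Iic_of_isClosed_of_isLowerSet (isClosed_Iic.preimage hu.2)
    ((isLowerSet_Iic z).preimage hu.1)

end IsUF

lemma monotoneOn_utilityT (hu : IsUF u) : MonotoneOn (utilityT u) m0Set := by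
  intro F hF G hG hFG z
  have hm := hu.measurable
  rcases hu.preimage_Iic z with h | h | ⟨a, h⟩
  · rw [utilityT_apply_eq_zero hF hm h, utilityT_apply_eq_zero hG hm h]
  · rw [utilityT_apply_eq_one hF hm h, utilityT_apply_eq_one hG hm h]
  · rw [utilityT_apply_of_preimage_eq_Iic hF hm h, utilityT_apply_of_preimage_eq_Iic hG hm h]
    exact hFG a

end Utility

/-! ### Point masses -/

/-- The cdf of the point mass at `c`. -/
def pointMass (c : ℝ) : ℝ → ℝ := cdf (Measure.dirac c)

lemma pointMass_mem_m0Set (c : ℝ) : pointMass c ∈ m0Set := cdf_mem_m0Set _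

lemma pointMass_of_le {c x : ℝ} (h : c ≤ x) : pointMass c x = 1 := by
  simp [pointMass, cdf_eq_real, measureReal_def, h]

lemma pointMass_of_lt {c x : ℝ} (h : x < c) : pointMass c x = 0 := by
  simp [pointMass, cdf_eq_real, measureReal_def, h]

lemma pointMass_le_pointMass {a b : ℝ} : pointMass b ≤ pointMass a ↔ a ≤ b := by
  constructor
  · intro h
    by_contra! hba
    have hb := h b
    rw [pointMass_of_le le_rfl, pointMass_of_lt hba] at hb
    exact zero_lt_one.not_ge hb
  · intro hab x
    rcases le_or_gt a x with hx | hx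
    · rw [pointMass_of_le hx]
      exact (apply_mem_Icc_of_mem_m0Set (pointMass_mem_m0Set b) x).2
    · rw [pointMass_of_lt hx, pointMass_of_lt (hx.trans_le hab)]

lemma pointMass_injective : Injective pointMass := fun _ _ h =>
  le_antisymm (pointMass_le_pointMass.1 h.ge) (pointMass_le_pointMass.1 h.le)

lemma utilityT_pointMass {u : ℝ → ℝ} (hu : Measurable u) (c : ℝ) :
    utilityT u (pointMass c) = pointMass (u c) := by
  rw [pointMass, utilityT_cdf _ hu, Measure.map_dirac' hu, pointMass]

lemma utilityT_const {F : ℝ → ℝ} (hF : F ∈ m0Set) (c : ℝ) :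
    utilityT (fun _ => c) F = pointMass c := by
  obtain ⟨μ, _, rfl⟩ := exists_eq_cdf_of_mem_m0Set hF
  rw [utilityT_cdf _ measurable_const, Measure.map_const, measure_univ, one_smul, pointMass]

/-! ### Intertwining utility transforms -/

/-- `T ∘ T^u = T^{u'} ∘ T` on `M₀`. Thus `T` commutes with the set of utility transforms when every
utility function `u` intertwines with some `u'`, and conversely; it commutes with the single
transform `T^u` when `u' = u`. -/
def Intertwines (T : (ℝ → ℝ) → ℝ → ℝ) (u u' : ℝ → ℝ) : Prop :=
  ∀ F ∈ m0Set, utilityT u' (T F) = T (utilityT u F)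

namespace Intertwines

variable {S T : (ℝ → ℝ) → ℝ → ℝ} {u u' u'' h : ℝ → ℝ}

lemma comp (hT : Intertwines T u' u'') (hS : Intertwines S u u') (hmaps : MapsTo S m0Set m0Set) :
    Intertwines (T ∘ S) u u'' := fun F hF => by
  rw [comp_apply, hT _ (hmaps hF), hS F hF, comp_apply]

lemma congr (hT : Intertwines T u u') (hu : Measurable u) (hST : EqOn S T m0Set) :
    Intertwines S u u' := fun F hF => by
  rw [hST hF, hT F hF, hST (mapsTo_utilityT hu hF)]

lemma semiconj (hT : Intertwines T u u') (hu : Measurable u) (hu' : Measurable u')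
    (hh : ∀ x, T (pointMass x) = pointMass (h x)) : Semiconj h u u' := fun x =>
  pointMass_injective <| by
    rw [← hh, ← utilityT_pointMass hu, ← hT _ (pointMass_mem_m0Set x), hh, utilityT_pointMass hu']

lemma map_pointMass {c : ℝ} (hT : Intertwines T u fun _ => c) (hu : Measurable u)
    (hmaps : MapsTo T m0Set m0Set) (x : ℝ) : T (pointMass (u x)) = pointMass c := by
  rw [← utilityT_pointMass hu, ← hT _ (pointMass_mem_m0Set x),
    utilityT_const (hmaps (pointMass_mem_m0Set x))]

end Intertwines

lemma intertwines_utilityT {g u u' : ℝ → ℝ} (hg : Measurable g) (hu : Measurable u)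
    (hu' : Measurable u') (h : Semiconj g u u') : Intertwines (utilityT g) u u' := fun F hF => by
  rw [utilityT_utilityT hF hu' hg, utilityT_utilityT hF hg hu, h.comp_eq]

/-! ### Probability distortions -/

section Distortion

variable {d F G v : ℝ → ℝ}

lemma IsDF.apply_mem_Icc (hd : IsDF d) {p : ℝ} (hp : p ∈ Icc (0 : ℝ) 1) : d p ∈ Icc (0 : ℝ) 1 :=
  ⟨hd.2.1 ▸ hd.1 (left_mem_Icc.2 zero_le_one) hp hp.1,
    hd.2.2 ▸ hd.1 hp (right_mem_Icc.2 zero_le_one) hp.2⟩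

lemma IsDF.monotone_comp (hd : IsDF d) (hF : F ∈ m0Set) : Monotone (d ∘ F) := fun x y hxy =>
  hd.1 (apply_mem_Icc_of_mem_m0Set hF x) (apply_mem_Icc_of_mem_m0Set hF y) (hF.1 hxy)

lemma le_distortT (hd : IsDF d) (hF : F ∈ m0Set) (x : ℝ) : d (F x) ≤ distortT d F x :=
  (hd.monotone_comp hF).le_rightLim le_rfl

lemma distortT_le (hd : IsDF d) (hF : F ∈ m0Set) {x y : ℝ} (hxy : x < y) :
    distortT d F x ≤ d (F y) :=
  (hd.monotone_comp hF).rightLim_le hxy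

lemma eq_distortT_of_sandwich (hG : ∀ x, ContinuousWithinAt G (Ici x) x)
    (lower : ∀ x, d (F x) ≤ G x) (upper : ∀ x y, x < y → G x ≤ d (F y)) : G = distortT d F :=
  funext fun x => (rightLim_eq_of_sandwich (hG x) (fun y _ => lower y) (upper x)).symm

lemma IsDFhat.tendsto_comp_atBot (hd : IsDFhat d) (hF : F ∈ m0Set) :
    Tendsto (d ∘ F) atBot (𝓝 0) := by
  have hiff := continuousWithinAt_Ioi_iff_Ici (f := d) (a := 0)
  rw [ContinuousWithinAt, ContinuousWithinAt, hd.1.2.1] at hiff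
  exact (hiff.1 hd.2.1).comp (tendsto_nhdsWithin_iff.2
    ⟨hF.2.2.1, Eventually.of_forall fun x => (apply_mem_Icc_of_mem_m0Set hF x).1⟩)

lemma IsDFhat.tendsto_comp_atTop (hd : IsDFhat d) (hF : F ∈ m0Set) :
    Tendsto (d ∘ F) atTop (𝓝 1) := by
  have hiff := continuousWithinAt_Iio_iff_Iic (f := d) (a := 1)
  rw [ContinuousWithinAt, ContinuousWithinAt, hd.1.2.2] at hiff
  exact (hiff.1 hd.2.2).comp (tendsto_nhdsWithin_iff.2
    ⟨hF.2.2.2, Eventually.of_forall fun x => (apply_mem_Icc_of_mem_m0Set hF x).2⟩)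

lemma mapsTo_distortT (hd : IsDFhat d) : MapsTo (distortT d) m0Set m0Set := by
  intro F hF
  have hdF := hd.1.monotone_comp hF
  refine ⟨hdF.rightLim, hdF.stieltjesFunction.right_continuous, ?_, ?_⟩
  · exact (hd.tendsto_comp_atBot hF).squeeze
      ((hd.tendsto_comp_atBot hF).comp (tendsto_atBot_add_const_right _ 1 tendsto_id))
      (fun x => le_distortT hd.1 hF x) fun x => distortT_le hd.1 hF (lt_add_one x)
  · exact (hd.tendsto_comp_atTop hF).squeeze
      ((hd.tendsto_comp_atTop hF).comp (tendsto_atTop_add_const_right _ 1 tendsto_id))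
      (fun x => le_distortT hd.1 hF x) fun x => distortT_le hd.1 hF (lt_add_one x)

lemma intertwines_distortT (hd : IsDFhat d) (hv : IsUF v) : Intertwines (distortT d) v v := by
  intro F hF
  have hm := hv.measurable
  have hdF := mapsTo_distortT hd hF
  have hvF := mapsTo_utilityT hm hF
  have hvdF := mapsTo_utilityT hm hdF
  refine eq_distortT_of_sandwich hvdF.2.1 (fun x => ?_) fun x y hxy => ?_
  · rcases hv.preimage_Iic x with h | h | ⟨a, h⟩
    · rw [utilityT_apply_eq_zero hF hm h, utilityT_apply_eq_zero hdF hm h, hd.1.2.1]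
    · rw [utilityT_apply_eq_one hF hm h, utilityT_apply_eq_one hdF hm h, hd.1.2.2]
    · rw [utilityT_apply_of_preimage_eq_Iic hF hm h, utilityT_apply_of_preimage_eq_Iic hdF hm h]
      exact le_distortT hd.1 hF a
  · rcases hv.preimage_Iic x with h | h | ⟨a, h⟩
    · rw [utilityT_apply_eq_zero hdF hm h]
      exact (hd.1.apply_mem_Icc (apply_mem_Icc_of_mem_m0Set hvF y)).1
    · have hy : v ⁻¹' Iic y = univ :=
        eq_univ_of_univ_subset (h ▸ preimage_mono (Iic_subset_Iic.2 hxy.le))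
      rw [utilityT_apply_eq_one hF hm hy, hd.1.2.2]
      exact (apply_mem_Icc_of_mem_m0Set hvdF x).2
    · have hva : v a ≤ x := h.superset self_mem_Iic
      have hev : ∀ᶠ b in 𝓝[>] a, v b < y :=
        (hv.2.tendsto a).mono_left nhdsWithin_le_nhds |>.eventually_lt_const (hva.trans_lt hxy)
      obtain ⟨b, hby, hab⟩ := (hev.and self_mem_nhdsWithin).exists
      rw [utilityT_apply_of_preimage_eq_Iic hdF hm h]
      refine (distortT_le hd.1 hF hab).trans ?_
      exact hd.1.1 (apply_mem_Icc_of_mem_m0Set hF b) (apply_mem_Icc_of_mem_m0Set hvF y)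
        (le_utilityT_apply hF hm fun t ht => (hv.1 ht).trans hby.le)

lemma IsDF.tendsto_nhdsGT_zero (hd : IsDF d) (hF : ∀ x, F x ∈ Ioc 0 1)
    (hG : Tendsto G atBot (𝓝 0)) (h : ∀ x, d (F x) ≤ G x) : Tendsto d (𝓝[>] 0) (𝓝 0) := by
  refine tendsto_order.2 ⟨fun a ha => ?_, fun a ha => ?_⟩
  · filter_upwards [Ioo_mem_nhdsGT zero_lt_one] with p hp
    exact ha.trans_le (hd.apply_mem_Icc (Ioo_subset_Icc_self hp)).1
  · obtain ⟨x, hx⟩ := (hG.eventually_lt_const ha).exists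
    filter_upwards [Ioo_mem_nhdsGT (hF x).1] with p hp
    exact (hd.1 ⟨hp.1.le, hp.2.le.trans (hF x).2⟩ (Ioc_subset_Icc_self (hF x)) hp.2.le).trans_lt
      ((h x).trans_lt hx)

lemma IsDF.tendsto_nhdsLT_one (hd : IsDF d) (hF : ∀ x, F x ∈ Ico 0 1)
    (hG : Tendsto G atTop (𝓝 1)) (h : ∀ x, G x ≤ d (F x)) : Tendsto d (𝓝[<] 1) (𝓝 1) := by
  refine tendsto_order.2 ⟨fun a ha => ?_, fun a ha => ?_⟩
  · obtain ⟨x, hx⟩ := (hG.eventually_const_lt ha).exists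
    filter_upwards [Ioo_mem_nhdsLT (hF x).2] with p hp
    exact hx.trans_le ((h x).trans (hd.1 (Ico_subset_Icc_self (hF x))
      ⟨(hF x).1.trans hp.1.le, hp.2.le⟩ hp.1.le))
  · filter_upwards [Ioo_mem_nhdsLT zero_lt_one] with p hp
    exact (hd.apply_mem_Icc (Ioo_subset_Icc_self hp)).2.trans_lt ha

end Distortion

/-! ### Two-point laws and ramps -/

/-- The cdf of the two-point law with mass `p` at `0` and mass `1 - p` at `1`. -/
def twoPoint (p : ℝ) : ℝ → ℝ := p • pointMass 0 + (1 - p) • pointMass 1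

lemma twoPoint_zero : twoPoint 0 = pointMass 1 := by simp [twoPoint]

lemma twoPoint_one : twoPoint 1 = pointMass 0 := by simp [twoPoint]

section TwoPoint

variable {p x : ℝ} {G : ℝ → ℝ}

lemma twoPoint_of_lt_zero (hx : x < 0) : twoPoint p x = 0 := by
  simp [twoPoint, pointMass_of_lt hx, pointMass_of_lt (hx.trans zero_lt_one)]

lemma twoPoint_of_mem_Ico (hx : x ∈ Ico 0 1) : twoPoint p x = p := by
  simp [twoPoint, pointMass_of_le hx.1, pointMass_of_lt hx.2]

lemma twoPoint_of_one_le (hx : 1 ≤ x) : twoPoint p x = 1 := by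
  simp [twoPoint, pointMass_of_le hx, pointMass_of_le (zero_le_one.trans hx)]

lemma twoPoint_mem_m0Set (hp : p ∈ Icc (0 : ℝ) 1) : twoPoint p ∈ m0Set :=
  convex_m0Set (pointMass_mem_m0Set 0) (pointMass_mem_m0Set 1) hp.1 (sub_nonneg.2 hp.2)
    (add_sub_cancel p 1)

lemma twoPoint_le (hG : G ∈ m0Set) (h0 : p ≤ G 0) (h1 : 1 ≤ G 1) : twoPoint p ≤ G := by
  intro x
  rcases lt_or_ge x 0 with hx0 | hx0
  · rw [twoPoint_of_lt_zero hx0]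
    exact (apply_mem_Icc_of_mem_m0Set hG x).1
  rcases lt_or_ge x 1 with hx1 | hx1
  · rw [twoPoint_of_mem_Ico ⟨hx0, hx1⟩]
    exact h0.trans (hG.1 hx0)
  · rw [twoPoint_of_one_le hx1]
    exact h1.trans (hG.1 hx1)

lemma le_twoPoint (hG : G ∈ m0Set) (h0 : ∀ x < 0, G x ≤ 0) (h1 : ∀ x ∈ Ico 0 1, G x ≤ p) :
    G ≤ twoPoint p := by
  intro x
  rcases lt_or_ge x 0 with hx0 | hx0
  · rw [twoPoint_of_lt_zero hx0]
    exact h0 x hx0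
  rcases lt_or_ge x 1 with hx1 | hx1
  · rw [twoPoint_of_mem_Ico ⟨hx0, hx1⟩]
    exact h1 x ⟨hx0, hx1⟩
  · rw [twoPoint_of_one_le hx1]
    exact (apply_mem_Icc_of_mem_m0Set hG x).2

end TwoPoint

lemma monotoneOn_twoPoint : MonotoneOn twoPoint (Icc 0 1) := fun _ _ _ hq hpq =>
  twoPoint_le (twoPoint_mem_m0Set hq)
    (hpq.trans_eq (twoPoint_of_mem_Ico (left_mem_Ico.2 zero_lt_one)).symm)
    (twoPoint_of_one_le le_rfl).ge

/-- For `x < y`, the utility function equal to `0` up to `x`, to `1` from `y` on, and affine in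
between; it collapses a law to one on `[0, 1]` without changing the mass of `(-∞, x]`. -/
def ramp (x y : ℝ) : ℝ → ℝ := fun t => max 0 (min 1 ((t - x) / (y - x)))

section Ramp

variable {x y t : ℝ} {F : ℝ → ℝ}

lemma ramp_nonneg : 0 ≤ ramp x y t := le_max_left _ _

lemma ramp_le_one : ramp x y t ≤ 1 := max_le zero_le_one (min_le_left _ _)

lemma isUF_ramp (hxy : x < y) : IsUF (ramp x y) := by
  refine ⟨fun s t hst => ?_, by unfold ramp; fun_prop⟩
  have : 0 ≤ y - x := sub_nonneg.2 hxy.le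
  unfold ramp
  gcongr

lemma ramp_nonpos_iff (hxy : x < y) : ramp x y t ≤ 0 ↔ t ≤ x := by
  simp [ramp, zero_lt_one.not_ge, div_le_iff₀ (sub_pos.2 hxy)]

lemma one_le_ramp_iff (hxy : x < y) : 1 ≤ ramp x y t ↔ y ≤ t := by
  simp [ramp, zero_lt_one.not_ge, one_le_div (sub_pos.2 hxy)]

lemma utilityT_ramp_zero (hxy : x < y) (hF : F ∈ m0Set) : utilityT (ramp x y) F 0 = F x :=
  utilityT_apply_of_preimage_eq_Iic hF (isUF_ramp hxy).measurable
    (Set.ext fun _ => ramp_nonpos_iff hxy)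

lemma twoPoint_le_utilityT_ramp (hxy : x < y) (hF : F ∈ m0Set) :
    twoPoint (F x) ≤ utilityT (ramp x y) F := by
  have hm := (isUF_ramp hxy).measurable
  exact twoPoint_le (mapsTo_utilityT hm hF) (utilityT_ramp_zero hxy hF).ge
    (utilityT_apply_eq_one hF hm (eq_univ_of_forall fun _ => ramp_le_one)).ge

lemma utilityT_ramp_le_twoPoint (hxy : x < y) (hF : F ∈ m0Set) :
    utilityT (ramp x y) F ≤ twoPoint (F y) := by
  have hm := (isUF_ramp hxy).measurable
  refine le_twoPoint (mapsTo_utilityT hm hF) (fun z hz => ?_) fun z hz => ?_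
  · exact (utilityT_apply_eq_zero hF hm
      (eq_empty_of_forall_notMem fun _ ht => (hz.trans_le ramp_nonneg).not_ge ht)).le
  · refine utilityT_apply_le hF hm fun t ht => ?_
    exact (lt_of_not_ge fun hyt => hz.2.not_ge (((one_le_ramp_iff hxy).2 hyt).trans ht)).le

end Ramp

lemma exists_isUF_apply_eq {a b c d : ℝ} (hab : a < b) (hcd : c ≤ d) :
    ∃ u, IsUF u ∧ u a = c ∧ u b = d := by
  have hdc : 0 ≤ d - c := sub_nonneg.2 hcd
  have ha : ramp a b a = 0 := le_antisymm ((ramp_nonpos_iff hab).2 le_rfl) ramp_nonneg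
  have hb : ramp a b b = 1 := le_antisymm ramp_le_one ((one_le_ramp_iff hab).2 le_rfl)
  refine ⟨fun t => c + (d - c) * ramp a b t, ⟨?_, ?_⟩, by simp [ha], by simp [hb]⟩
  · exact ((isUF_ramp hab).1.const_mul hdc).const_add c
  · exact ((isUF_ramp hab).2.const_mul _).const_add c

/-! ### Transforms commuting with each utility transform -/

section Equivariant

variable {S : (ℝ → ℝ) → ℝ → ℝ} {F : ℝ → ℝ}

/-- The candidate distortion function of a transform `S`, read off from the action of `S` on
two-point laws: `S = T_d` forces `d p = (d ∘ twoPoint p)(0+) = S (twoPoint p) 0`. -/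
def inducedDistortion (S : (ℝ → ℝ) → ℝ → ℝ) (p : ℝ) : ℝ := S (twoPoint p) 0

lemma isDF_inducedDistortion (hmono : MonotoneOn S m0Set)
    (hpt : ∀ c, S (pointMass c) = pointMass c) : IsDF (inducedDistortion S) := by
  refine ⟨fun p hp q hq hpq => ?_, ?_, ?_⟩
  · exact hmono (twoPoint_mem_m0Set hp) (twoPoint_mem_m0Set hq) (monotoneOn_twoPoint hp hq hpq) 0
  · rw [inducedDistortion, twoPoint_zero, hpt, pointMass_of_lt zero_lt_one]
  · rw [inducedDistortion, twoPoint_one, hpt, pointMass_of_le le_rfl]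

lemma apply_mem_Icc_inducedDistortion (hmaps : MapsTo S m0Set m0Set) (hmono : MonotoneOn S m0Set)
    (hcomm : ∀ u, IsUF u → Intertwines S u u) (hF : F ∈ m0Set) {x y : ℝ} (hxy : x < y) :
    S F x ∈ Icc (inducedDistortion S (F x)) (inducedDistortion S (F y)) := by
  have hG := mapsTo_utilityT (isUF_ramp hxy).measurable hF
  have hSF : S F x = S (utilityT (ramp x y) F) 0 := by
    rw [← hcomm _ (isUF_ramp hxy) F hF, utilityT_ramp_zero hxy (hmaps hF)]
  rw [hSF]
  exact ⟨hmono (twoPoint_mem_m0Set (apply_mem_Icc_of_mem_m0Set hF x)) hG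
      (twoPoint_le_utilityT_ramp hxy hF) 0,
    hmono hG (twoPoint_mem_m0Set (apply_mem_Icc_of_mem_m0Set hF y))
      (utilityT_ramp_le_twoPoint hxy hF) 0⟩

theorem exists_eqOn_distortT (hmaps : MapsTo S m0Set m0Set) (hmono : MonotoneOn S m0Set)
    (hcomm : ∀ u, IsUF u → Intertwines S u u) : ∃ d, IsDFhat d ∧ EqOn S (distortT d) m0Set := by
  have hpt : ∀ c, S (pointMass c) = pointMass c := fun c =>
    (hcomm _ (isUF_const c)).map_pointMass measurable_const hmaps 0
  have hd := isDF_inducedDistortion hmono hpt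
  have bounds {F : ℝ → ℝ} (hF : F ∈ m0Set) {x y : ℝ} (hxy : x < y) :=
    apply_mem_Icc_inducedDistortion hmaps hmono hcomm hF hxy
  -- The logistic cdf takes values in `(0, 1)` only, so it detects `d(0+)` and `d(1-)`.
  have hσ := sigmoid_mem_m0Set
  have hSσ := hmaps hσ
  refine ⟨inducedDistortion S, ⟨hd, ?_, ?_⟩, fun F hF => ?_⟩
  · exact hd.tendsto_nhdsGT_zero (fun x => ⟨Real.sigmoid_pos x, Real.sigmoid_le_one x⟩)
      hSσ.2.2.1 fun x => (bounds hσ (lt_add_one x)).1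
  · exact hd.tendsto_nhdsLT_one (fun x => ⟨Real.sigmoid_nonneg x, Real.sigmoid_lt_one x⟩)
      (hSσ.2.2.2.comp (tendsto_atTop_add_const_right _ (-1) tendsto_id)) fun x =>
      (bounds hσ (add_neg_lt_iff_lt_add.2 (lt_add_one x))).2
  · exact eq_distortT_of_sandwich (hmaps hF).2.1 (fun x => (bounds hF (lt_add_one x)).1)
      fun x y hxy => (bounds hF hxy).2

end Equivariant

/-! ### Transforms commuting with the set of utility transforms -/

section Commuting

variable {T : (ℝ → ℝ) → ℝ → ℝ}

lemma exists_surjective_map_pointMass (hmaps : MapsTo T m0Set m0Set)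
    (hleft : ∀ u, IsUF u → ∃ u', IsUF u' ∧ Intertwines T u u')
    (hright : ∀ u', IsUF u' → ∃ u, IsUF u ∧ Intertwines T u u') :
    ∃ h : ℝ → ℝ, Surjective h ∧ ∀ x, T (pointMass x) = pointMass (h x) := by
  have hsurj : ∀ y, ∃ x, T (pointMass x) = pointMass y := fun y => by
    obtain ⟨u, hu, hTu⟩ := hright _ (isUF_const y)
    exact ⟨u 0, hTu.map_pointMass hu.measurable hmaps 0⟩
  have hpt : ∀ x, ∃ y, T (pointMass x) = pointMass y := fun x => by
    obtain ⟨x₀, hx₀⟩ := hsurj 0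
    obtain ⟨u', hu', hTu'⟩ := hleft _ (isUF_const x)
    refine ⟨u' 0, ?_⟩
    rw [← utilityT_const (pointMass_mem_m0Set x₀) x, ← hTu' _ (pointMass_mem_m0Set x₀), hx₀,
      utilityT_pointMass hu'.measurable]
  choose h hh using hpt
  refine ⟨h, fun y => ?_, hh⟩
  obtain ⟨x, hx⟩ := hsurj y
  exact ⟨x, pointMass_injective ((hh x).symm.trans hx)⟩

lemma injective_of_forall_semiconj {α : Type*} [Nontrivial α] {h : ℝ → α} (hsurj : Surjective h)
    (hsemi : ∀ u, IsUF u → ∃ u', Semiconj h u u') : Injective h := by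
  intro a b heq
  by_contra hne
  wlog hab : a < b generalizing a b
  · exact this heq.symm (Ne.symm hne) (lt_of_le_of_ne (not_lt.1 hab) (Ne.symm hne))
  have hle : ∀ c d, c ≤ d → h c = h d := fun c d hcd => by
    obtain ⟨u, hu, rfl, rfl⟩ := exists_isUF_apply_eq hab hcd
    obtain ⟨u', hu'⟩ := hsemi u hu
    rw [hu' a, hu' b, heq]
  obtain ⟨p, q, hpq⟩ := exists_pair_ne α
  obtain ⟨c, rfl⟩ := hsurj p
  obtain ⟨d, rfl⟩ := hsurj q
  exact hpq ((le_total c d).elim (hle c d) fun hdc => (hle d c hdc).symm)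

lemma exists_orderIso_map_pointMass (hmaps : MapsTo T m0Set m0Set) (hmono : MonotoneOn T m0Set)
    (hleft : ∀ u, IsUF u → ∃ u', IsUF u' ∧ Intertwines T u u')
    (hright : ∀ u', IsUF u' → ∃ u, IsUF u ∧ Intertwines T u u') :
    ∃ e : ℝ ≃o ℝ, ∀ x, T (pointMass x) = pointMass (e x) := by
  obtain ⟨h, hsurj, hh⟩ := exists_surjective_map_pointMass hmaps hleft hright
  have hhmono : Monotone h := fun a b hab => by
    rw [← pointMass_le_pointMass, ← hh, ← hh]
    exact hmono (pointMass_mem_m0Set b) (pointMass_mem_m0Set a) (pointMass_le_pointMass.2 hab)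
  have hinj : Injective h := injective_of_forall_semiconj hsurj fun u hu => by
    obtain ⟨u', hu', hTu⟩ := hleft u hu
    exact ⟨u', hTu.semiconj hu.measurable hu'.measurable hh⟩
  exact ⟨(hhmono.strictMono_of_injective hinj).orderIsoOfSurjective h hsurj, hh⟩

lemma intertwines_self_comp_utilityT_symm {e : ℝ ≃o ℝ}
    (he : ∀ x, T (pointMass x) = pointMass (e x))
    (hleft : ∀ u, IsUF u → ∃ u', IsUF u' ∧ Intertwines T u u') {u : ℝ → ℝ} (hu : IsUF u) :
    Intertwines (T ∘ utilityT e.symm) u u := by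
  have hes := (isUF_orderIso e.symm).measurable
  have hv : IsUF (e.symm ∘ u ∘ e) := (isUF_orderIso e.symm).comp (hu.comp (isUF_orderIso e))
  obtain ⟨u', hu', hTv⟩ := hleft _ hv
  have hu'_eq : u' = u := funext fun x => by
    simpa using (hTv.semiconj hv.measurable hu'.measurable he (e.symm x)).symm
  exact (hu'_eq ▸ hTv).comp
    (intertwines_utilityT hes hu.measurable hv.measurable fun x => by simp)
    (mapsTo_utilityT hes)

theorem exists_eqOn_distortT_comp_utilityT (hmaps : MapsTo T m0Set m0Set)
    (hmono : MonotoneOn T m0Set) (hleft : ∀ u, IsUF u → ∃ u', IsUF u' ∧ Intertwines T u u')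
    (hright : ∀ u', IsUF u' → ∃ u, IsUF u ∧ Intertwines T u u') :
    ∃ d, ∃ e : ℝ ≃o ℝ, IsDFhat d ∧ EqOn T (distortT d ∘ utilityT e) m0Set := by
  obtain ⟨e, he⟩ := exists_orderIso_map_pointMass hmaps hmono hleft hright
  have hm := (isUF_orderIso e).measurable
  have hes := isUF_orderIso e.symm
  have hes_maps := mapsTo_utilityT hes.measurable
  obtain ⟨d, hd, hS⟩ := exists_eqOn_distortT (hmaps.comp hes_maps)
    (hmono.comp (monotoneOn_utilityT hes) hes_maps)
    fun _ => intertwines_self_comp_utilityT_symm he hleft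
  refine ⟨d, e, hd, fun F hF => ?_⟩
  rw [comp_apply, ← hS (mapsTo_utilityT hm hF), comp_apply, utilityT_utilityT hF hes.measurable hm,
    show ⇑e.symm ∘ ⇑e = id from funext e.symm_apply_apply, utilityT_id hF]

lemma intertwines_of_eqOn_distortT_comp_utilityT {d u u' : ℝ → ℝ} {e : ℝ ≃o ℝ} (hd : IsDFhat d)
    (hT : EqOn T (distortT d ∘ utilityT e) m0Set) (hu : IsUF u) (hu' : IsUF u')
    (h : Semiconj e u u') : Intertwines T u u' := by
  have he := (isUF_orderIso e).measurable
  exact ((intertwines_distortT hd hu').comp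
    (intertwines_utilityT he hu.measurable hu'.measurable h) (mapsTo_utilityT he)).congr
      hu.measurable hT

end Commuting

/-- A monotone map `T : M₀ → M₀` commutes with the set `𝒰` of all utility
transforms (`𝒰 ∘ T = T ∘ 𝒰` as sets of maps `M₀ → M₀`) if and only if
`T = T_d ∘ T^u` for some `d ∈ F̂_D` and some strictly increasing, continuous,
surjective `u : ℝ → ℝ`. -/
theorem stmt12 (T : (ℝ → ℝ) → ℝ → ℝ) (hT : ∀ F ∈ m0Set, T F ∈ m0Set)
    (hmono : ∀ F ∈ m0Set, ∀ G ∈ m0Set, (∀ x, G x ≤ F x) → ∀ x, T G x ≤ T F x) :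
    ((∀ u : ℝ → ℝ, IsUF u → ∃ u' : ℝ → ℝ, IsUF u' ∧
        ∀ F ∈ m0Set, utilityT u' (T F) = T (utilityT u F)) ∧
      (∀ u' : ℝ → ℝ, IsUF u' → ∃ u : ℝ → ℝ, IsUF u ∧
        ∀ F ∈ m0Set, utilityT u' (T F) = T (utilityT u F))) ↔
      ∃ d u : ℝ → ℝ, IsDFhat d ∧ StrictMono u ∧ Continuous u ∧ Function.Surjective u ∧
        ∀ F ∈ m0Set, T F = distortT d (utilityT u F) := by
  constructor
  · rintro ⟨hleft, hright⟩
    obtain ⟨d, e, hd, hTd⟩ := exists_eqOn_distortT_comp_utilityT hT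
      (fun F hF G hG => hmono G hG F hF) hleft hright
    exact ⟨d, e, hd, e.strictMono, e.continuous, e.surjective, hTd⟩
  · rintro ⟨d, h, hd, hstrict, -, hsurj, hTd⟩
    let e : ℝ ≃o ℝ := hstrict.orderIsoOfSurjective h hsurj
    have he := isUF_orderIso e
    have hes := isUF_orderIso e.symm
    refine ⟨fun u hu => ?_, fun u' hu' => ?_⟩
    · have hu' : IsUF (e ∘ u ∘ e.symm) := he.comp (hu.comp hes)
      exact ⟨_, hu', intertwines_of_eqOn_distortT_comp_utilityT (e := e) hd hTd hu hu'
        fun x => by simp⟩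
    · have hu : IsUF (e.symm ∘ u' ∘ e) := hes.comp (hu'.comp he)
      exact ⟨_, hu, intertwines_of_eqOn_distortT_comp_utilityT (e := e) hd hTd hu hu'
        fun x => by simp⟩
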